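/- Let G be a group, V a finite-dimensional complex vector space, and ρ : G → GL(V) a representation such that End V decomposes as a direct sum of pairwise non-isomorphic irreducible G-subrepresentations (under the conjugation action h · T = ρ(h) T ρ(h)^{-1}, equivalently the action on V^* ⊗ V). Let v ∈ V, v^* ∈ V^*, and T ∈ End V. Suppose there is an irreducible summand W of End V such that T has nonzero component in W and v^* ⊗ v (viewed in End V via the dual pairing) has nonzero component in the summand dual to W under the trace pairing. Then there exists h ∈ G with (ρ(h)·v^*)(T (ρ(h) v)) ≠ 0, where ρ(h)·v^* denotes the contragredient action. -/

import Mathlib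

theorem aux_key {G K E ι : Type*} [Field K] [AddCommGroup E] [Module K E] [Fintype ι] [DecidableEq ι]
    (c : G → E →ₗ[K] E) (W : ι → Submodule K E) (p : ι → E →ₗ[K] E)
    (hpW : ∀ i x, p i x ∈ W i) (hsum : ∀ x, ∑ i, p i x = x)
    (hpc : ∀ i g x, p i (c g x) = c g (p i x))
    (hirr : ∀ i, ∀ U ≤ W i, (∀ g, ∀ x ∈ U, c g x ∈ U) → U = ⊥ ∨ U = W i)
    (hinv : ∀ i g, ∀ x ∈ W i, c g x ∈ W i)
    (hnon : ∀ i j, i ≠ j → ¬ ∃ f : E →ₗ[K] E, (∀ g x, f (c g x) = c g (f x)) ∧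
      Submodule.map f (W i) = W j ∧ ∀ x ∈ W i, f x = 0 → x = 0)
    (hpid : ∀ i, ∀ x ∈ W i, p i x = x) (i : ι) (s : Finset ι) :
    ∀ U : Submodule K E, (∀ g, ∀ x ∈ U, c g x ∈ U) → (∀ x ∈ U, ∀ j ∉ s, p j x = 0) →
      (∃ x ∈ U, p i x ≠ 0) → W i ≤ U := by
  -- image of an invariant submodule under a projection
  have himg : ∀ (U : Submodule K E), (∀ g, ∀ x ∈ U, c g x ∈ U) → ∀ k, (∃ x ∈ U, p k x ≠ 0) →
      U.map (p k) = W k := by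
    rintro U hU k ⟨x, hx, hne⟩
    refine (hirr k (U.map (p k)) ?_ ?_).resolve_left ?_
    · rintro _ ⟨y, -, rfl⟩
      exact hpW k y
    · rintro g _ ⟨y, hy, rfl⟩
      exact ⟨c g y, hU g y hy, hpc k g y⟩
    · intro h
      have : p k x ∈ U.map (p k) := ⟨x, hx, rfl⟩
      rw [h] at this
      exact hne (by simpa using this)
  induction s using Finset.strongInduction with
  | H s ih =>
  rintro U hU hs ⟨x, hx, hne⟩
  by_cases hsi : ∃ j ∈ s, j ≠ i
  · obtain ⟨j, hj, hji⟩ := hsi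
    by_cases hex : ∃ y ∈ U ⊓ LinearMap.ker (p j), p i y ≠ 0
    · refine (ih (s.erase j) (Finset.erase_ssubset hj) (U ⊓ LinearMap.ker (p j)) ?_ ?_ hex).trans
        inf_le_left
      · rintro g y ⟨hy, hy'⟩
        refine ⟨hU g y hy, ?_⟩
        have hy2 : p j y = 0 := hy'
        change p j (c g y) = 0
        rw [hpc, hy2, map_zero]
      · rintro y ⟨hy, hy'⟩ k hk
        by_cases hkj : k = j
        · subst hkj
          exact hy'
        · exact hs y hy k (fun h => hk (Finset.mem_erase.2 ⟨hkj, h⟩))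
    · exfalso
      have hker : ∀ y ∈ U, p j y = 0 → p i y = 0 := by
        intro y hy h
        by_contra h'
        exact hex ⟨y, ⟨hy, h⟩, h'⟩
      have hjU := himg U hU j ⟨x, hx, fun h => hne (hker x hx h)⟩
      have hiU := himg U hU i ⟨x, hx, hne⟩
      let a : U →ₗ[K] W j := ((p j).codRestrict (W j) (hpW j)).domRestrict U
      have ha : LinearMap.range a = ⊤ := by
        rw [LinearMap.range_eq_top]
        rintro ⟨w, hw⟩
        rw [← hjU] at hw
        obtain ⟨y, hy, rfl⟩ := hw
        exact ⟨⟨y, hy⟩, rfl⟩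
      obtain ⟨σ, hσ⟩ := a.exists_rightInverse_of_surjective ha
      have hσ1 : ∀ w : W j, p j (σ w : E) = w := fun w =>
        congrArg Subtype.val (LinearMap.congr_fun hσ w)
      let f : E →ₗ[K] E := (p i) ∘ₗ U.subtype ∘ₗ σ ∘ₗ (p j).codRestrict (W j) (hpW j)
      have hf : ∀ z : E, ∀ y ∈ U, p j y = p j z → f z = p i y := by
        intro z y hy hyz
        have h1 := hσ1 ((p j).codRestrict (W j) (hpW j) z)
        have h2 : p j ((σ ((p j).codRestrict (W j) (hpW j) z) : E) - y) = 0 := by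
          rw [map_sub, h1, hyz]; simp
        have h3 := hker _ (U.sub_mem (σ _).2 hy) h2
        rw [map_sub, sub_eq_zero] at h3
        exact h3
      have hlift : ∀ z, ∃ y ∈ U, p j y = p j z := by
        intro z
        have := hpW j z
        rw [← hjU] at this
        exact this
      have hfc : ∀ g z, f (c g z) = c g (f z) := by
        intro g z
        obtain ⟨y, hy, hyz⟩ := hlift z
        rw [hf z y hy hyz, hf (c g z) (c g y) (hU g y hy) (by rw [hpc, hpc, hyz]), hpc]
      have hmap : (W j).map f = W i := by
        apply le_antisymm
        · rintro _ ⟨y, -, rfl⟩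
          exact hpW i _
        · intro w hw
          rw [← hiU] at hw
          obtain ⟨y, hy, rfl⟩ := hw
          exact ⟨p j y, hpW j y, hf _ y hy (hpid j _ (hpW j y)).symm⟩
      refine hnon j i hji ⟨f, hfc, hmap, ?_⟩
      rcases hirr j (W j ⊓ LinearMap.ker f) inf_le_left (by
        rintro g y ⟨hy, hy'⟩
        refine ⟨hinv j g y hy, ?_⟩
        have hy2 : f y = 0 := hy'
        change f (c g y) = 0
        rw [hfc, hy2, map_zero]) with h | h
      · intro y hy hy0
        have : y ∈ W j ⊓ LinearMap.ker f := ⟨hy, hy0⟩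
        rw [h] at this
        simpa using this
      · exfalso
        have h1 : p i x ∈ (W j).map f := hmap ▸ hpW i x
        obtain ⟨y, hy, hy'⟩ := h1
        have hyk : y ∈ W j ⊓ LinearMap.ker f := h.symm.le hy
        have : f y = 0 := hyk.2
        exact hne (hy' ▸ this)
  · push Not at hsi
    have hUi : ∀ y ∈ U, p i y = y := by
      intro y hy
      conv_rhs => rw [← hsum y]
      rw [Finset.sum_eq_single i]
      · intro k _ hk
        exact hs y hy k (fun h => hk (hsi k h))
      · simp
    rw [← himg U hU i ⟨x, hx, hne⟩]
    rintro _ ⟨y, hy, rfl⟩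
    rw [hUi y hy]
    exact hy

theorem aux_proj {K E ι : Type*} [Field K] [AddCommGroup E] [Module K E] [Fintype ι] [DecidableEq ι]
    (W : ι → Submodule K E) (hindep : iSupIndep W) (hsup : ⨆ i, W i = ⊤) :
    ∃ p : ι → E →ₗ[K] E, (∀ i x, p i x ∈ W i) ∧ (∀ x, ∑ i, p i x = x) ∧
      (∀ i, ∀ x ∈ W i, p i x = x) ∧ (∀ i j, i ≠ j → ∀ x ∈ W j, p i x = 0) := by
  classical
  have hI : DirectSum.IsInternal W :=
    (DirectSum.isInternal_submodule_iff_iSupIndep_and_iSup_eq_top W).2 ⟨hindep, hsup⟩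
  let e := LinearEquiv.ofBijective (DirectSum.coeLinearMap W) hI
  have he : ∀ i (x : W i), e.symm (x : E) = DirectSum.lof K ι (fun i => W i) i x := by
    intro i x
    rw [LinearEquiv.symm_apply_eq]
    exact (DirectSum.coeLinearMap_lof W i x).symm
  refine ⟨fun i => (W i).subtype ∘ₗ DirectSum.component K ι (fun i => W i) i ∘ₗ e.symm.toLinearMap,
    fun i x => Subtype.coe_prop _, ?_, ?_, ?_⟩
  · intro x
    have h2 : e (e.symm x) = x := e.apply_symm_apply x
    conv_rhs => rw [← h2]
    change _ = DirectSum.coeLinearMap W (e.symm x)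
    rw [DirectSum.coeLinearMap_eq_dfinsuppSum, DFinsupp.sum_eq_sum_fintype]
    · rfl
    · simp
  · intro i x hx
    have := he i ⟨x, hx⟩
    simp only [LinearMap.comp_apply, LinearEquiv.coe_coe]
    rw [this, DirectSum.component.lof_self]
    rfl
  · intro i j hij x hx
    have := he j ⟨x, hx⟩
    simp only [LinearMap.comp_apply, LinearEquiv.coe_coe]
    rw [this, DirectSum.component.of, dif_neg (Ne.symm hij)]
    rfl

theorem aux_main {G K E ι : Type*} [Field K] [AddCommGroup E] [Module K E] [Finite ι]
    (c : G → E →ₗ[K] E) (W : ι → Submodule K E) (hindep : iSupIndep W) (hsup : ⨆ i, W i = ⊤)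
    (hirr : ∀ i, ∀ U ≤ W i, (∀ g, ∀ x ∈ U, c g x ∈ U) → U = ⊥ ∨ U = W i)
    (hinv : ∀ i g, ∀ x ∈ W i, c g x ∈ W i)
    (hnon : ∀ i j, i ≠ j → ¬ ∃ f : E →ₗ[K] E, (∀ g x, f (c g x) = c g (f x)) ∧
      Submodule.map f (W i) = W j ∧ ∀ x ∈ W i, f x = 0 → x = 0)
    (i : ι) (U : Submodule K E) (hU : ∀ g, ∀ x ∈ U, c g x ∈ U) (x : E) (hx : x ∈ U)
    (hxi : x ∉ ⨆ j ≠ i, W j) : W i ≤ U := by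
  classical
  have := Fintype.ofFinite ι
  obtain ⟨p, hpW, hsum, hpid, hp0⟩ := aux_proj W hindep hsup
  have hpc : ∀ i g x, p i (c g x) = c g (p i x) := by
    intro i g x
    conv_lhs => rw [← hsum x]
    rw [map_sum, map_sum, Finset.sum_eq_single i]
    · exact hpid i _ (hinv i g _ (hpW i x))
    · intro k _ hk
      exact hp0 i k (Ne.symm hk) _ (hinv k g _ (hpW k x))
    · simp
  refine aux_key c W p hpW hsum hpc hirr hinv hnon hpid i Finset.univ U hU (by simp) ⟨x, hx, ?_⟩
  intro h0
  apply hxi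
  rw [← hsum x]
  refine Submodule.sum_mem _ fun k _ => ?_
  by_cases hk : k = i
  · subst hk
    rw [h0]
    exact Submodule.zero_mem _
  · exact (le_iSup₂_of_le k hk le_rfl : W k ≤ ⨆ j ≠ i, W j) (hpW k x)


/-- If `End V` is a multiplicity-free direct sum of irreducible `G`-subrepresentations
(under conjugation), `T` has nonzero component in a summand `W`, and `v* ⊗ v` has nonzero
component in the summand dual to `W` under the trace pairing, then
`(ρ(h)·v*)(T ρ(h) v) ≠ 0` for some `h ∈ G`. -/
theorem pairing_nonvanishing {G : Type*} [Group G]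
    {V : Type*} [AddCommGroup V] [Module ℂ V] [FiniteDimensional ℂ V]
    (ρ : G →* (Module.End ℂ V)ˣ)
    {ι : Type*} [Finite ι] (W : ι → Submodule ℂ (Module.End ℂ V))
    -- `End V` is the internal direct sum of the `W i`
    (hindep : iSupIndep W) (hsup : ⨆ i, W i = ⊤)
    -- each `W i` is `G`-invariant for the conjugation action
    (hinv : ∀ (i : ι) (g : G), ∀ T ∈ W i,
      ((ρ g : Module.End ℂ V) * T * ((ρ g)⁻¹ : (Module.End ℂ V)ˣ)) ∈ W i)
    -- each `W i` is irreducible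
    (hirr : ∀ i : ι, W i ≠ ⊥ ∧
      ∀ U ≤ W i, (∀ g : G, ∀ T ∈ U,
          ((ρ g : Module.End ℂ V) * T * ((ρ g)⁻¹ : (Module.End ℂ V)ˣ)) ∈ U) →
        U = ⊥ ∨ U = W i)
    -- the `W i` are pairwise non-isomorphic as `G`-representations
    (hnoniso : ∀ i j : ι, i ≠ j →
      ¬ ∃ f : Module.End ℂ V →ₗ[ℂ] Module.End ℂ V,
        (∀ (g : G) (T : Module.End ℂ V),
          f ((ρ g : Module.End ℂ V) * T * ((ρ g)⁻¹ : (Module.End ℂ V)ˣ)) =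
            (ρ g : Module.End ℂ V) * f T * ((ρ g)⁻¹ : (Module.End ℂ V)ˣ)) ∧
        Submodule.map f (W i) = W j ∧ (∀ T ∈ W i, f T = 0 → T = 0))
    (v : V) (vstar : V →ₗ[ℂ] ℂ) (T : Module.End ℂ V)
    -- `T` has nonzero component in `W i`, and `v* ⊗ v` has nonzero component in the
    -- summand `W i'` dual to `W i` under the trace pairing
    (hcomp : ∃ i i' : ι,
      (∃ S ∈ W i, ∃ S' ∈ W i', LinearMap.trace ℂ V (S * S') ≠ 0) ∧
      T ∉ (⨆ j ≠ i, W j) ∧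
      (vstar.smulRight v : Module.End ℂ V) ∉ (⨆ j ≠ i', W j)) :
    ∃ h : G, vstar ((((ρ h)⁻¹ : (Module.End ℂ V)ˣ) : Module.End ℂ V) (T ((ρ h : Module.End ℂ V) v))) ≠ 0 := by
  classical
  let E := Module.End ℂ V
  let c : G → E →ₗ[ℂ] E := fun g =>
    LinearMap.mulRight ℂ (((ρ g)⁻¹ : (Module.End ℂ V)ˣ) : Module.End ℂ V) ∘ₗ
      LinearMap.mulLeft ℂ (ρ g : Module.End ℂ V)
  have key := aux_main c W hindep hsup (fun i => (hirr i).2) hinv hnoniso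
  -- the trace pairing is invariant
  have htr : ∀ g (X Y : E), LinearMap.trace ℂ V (c g X * Y) =
      LinearMap.trace ℂ V (X * c g⁻¹ Y) := by
    intro g X Y
    change LinearMap.trace ℂ V ((ρ g : E) * X * ((ρ g)⁻¹ : Eˣ) * Y) =
      LinearMap.trace ℂ V (X * ((ρ g⁻¹ : E) * Y * ((ρ g⁻¹)⁻¹ : Eˣ)))
    rw [map_inv, inv_inv, mul_assoc, mul_assoc, LinearMap.trace_mul_comm]
    simp only [mul_assoc]
  have hcc : ∀ g h (X : E), c g (c h X) = c (g * h) X := by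
    intro g h X
    change (ρ g : E) * ((ρ h : E) * X * ((ρ h)⁻¹ : Eˣ)) * ((ρ g)⁻¹ : Eˣ) =
      (ρ (g * h) : E) * X * ((ρ (g * h))⁻¹ : Eˣ)
    simp only [map_mul, mul_inv_rev, Units.val_mul, mul_assoc]
  obtain ⟨i, i', ⟨S, hS, S', hS', hne⟩, hT, hA⟩ := hcomp
  by_contra hcon
  push Not at hcon
  let A : E := vstar.smulRight v
  let τ : E → E →ₗ[ℂ] ℂ := fun Y => LinearMap.trace ℂ V ∘ₗ LinearMap.mulRight ℂ Y
  have hTA : ∀ h, LinearMap.trace ℂ V (T * c h A) = 0 := by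
    intro h
    have h1 := htr h⁻¹ T A
    rw [inv_inv] at h1
    rw [← h1]
    have h2 : c h⁻¹ T * A = vstar.smulRight (c h⁻¹ T v) := by
      ext u
      exact LinearMap.map_smul (c h⁻¹ T : V →ₗ[ℂ] V) (vstar u) v
    rw [h2, LinearMap.trace_smulRight]
    have h3 := hcon h
    change vstar (((ρ h⁻¹ : E) * T * ((ρ h⁻¹)⁻¹ : Eˣ)) v) = 0
    rw [map_inv, inv_inv]
    exact h3
  let M : Submodule ℂ E := ⨅ h, LinearMap.ker (τ (c h A))
  have hM : ∀ X, X ∈ M ↔ ∀ h, LinearMap.trace ℂ V (X * c h A) = 0 := by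
    intro X
    simp only [M, Submodule.mem_iInf]
    rfl
  have hWM : W i ≤ M := by
    refine key i M ?_ T ((hM T).2 hTA) hT
    intro g X hX
    rw [hM] at hX ⊢
    intro h
    rw [htr, hcc]
    exact hX _
  let N : Submodule ℂ E := ⨅ X : W i, LinearMap.ker (τ (X : E))
  have hN : ∀ Y, Y ∈ N ↔ ∀ X ∈ W i, LinearMap.trace ℂ V (Y * X) = 0 := by
    intro Y
    simp only [N, Submodule.mem_iInf, Subtype.forall]
    rfl
  have hc1 : ∀ X : E, c 1 X = X := by
    intro X
    change (ρ 1 : E) * X * ((ρ 1)⁻¹ : Eˣ) = X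
    simp
  have hWN : W i' ≤ N := by
    refine key i' N ?_ A ((hN A).2 ?_) hA
    · intro g Y hY
      rw [hN] at hY ⊢
      intro X hX
      rw [htr]
      exact hY _ (hinv i g⁻¹ X hX)
    · intro X hX
      have := (hM X).1 (hWM hX) 1
      rw [hc1] at this
      rw [LinearMap.trace_mul_comm]
      exact this
  apply hne
  rw [LinearMap.trace_mul_comm]
  exact (hN S').1 (hWN hS') S hS
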